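/- arXiv:2105.02077 — 3 statements merged into one kernel-verified Lean document; each statement's English description precedes it below -/
import Mathlib

section
/- Case-base sampling identifies the conditional intention-to-treat risk ratio (Theorem B2). Assume there are constants δ_l ∈ (0,1] such that P(S=1 | L0=l, A0=a) = δ_l for every l with P(L0=l, A0=a) > 0 and every a ∈ {0,1}. Assume consistency, BCE, and positivity, and fix l with P(L0=l, Y_K=1) > 0, P(L0=l, S=1) > 0, and P(Y_K(0)=1 | L0=l) > 0. Then ( E[1{A0=1} | L0=l, Y_K=1] / E[1{A0=0} | L0=l, Y_K=1] ) / ( E[1{A0=1} | L0=l, S=1] / E[1{A0=0} | L0=l, S=1] ) = P(Y_K(1)=1 | L0=l) / P(Y_K(0)=1 | L0=l). -/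
open MeasureTheory

/-- `prb P E` is the probability of the event `E` under `P`, as a real number. -/
noncomputable def prb {Ω : Type*} [MeasurableSpace Ω] (P : Measure Ω) (E : Set Ω) : ℝ :=
  (P E).toReal

/-- `cprb P E F` is the conditional probability `P(E | F)`. -/
noncomputable def cprb {Ω : Type*} [MeasurableSpace Ω] (P : Measure Ω) (E F : Set Ω) : ℝ :=
  prb P (E ∩ F) / prb P F

/-- `cexpb P X F` is the conditional expectation `E[X | F]` of the random variable `X`
given the event `F`. -/
noncomputable def cexpb {Ω : Type*} [MeasurableSpace Ω] (P : Measure Ω) (X : Ω → ℝ)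
    (F : Set Ω) : ℝ :=
  (∫ ω in F, X ω ∂P) / prb P F

/-!
Within the stratum `L0 = l`, Bayes' rule in odds form writes the odds of treatment given an event
as the ratio of the conditional probabilities of that event in the two arms times the propensity
odds. For the event `S = 1` the first factor is `1`, because both arms are sampled at the same
rate; for the event `Y_K = 1` consistency and exchangeability turn it into the risk ratio. The
propensity odds cancel in the quotient.
-/

section ConditionalProbability

variable {Ω : Type*} [MeasurableSpace Ω] {P : Measure Ω} {E E' F G : Set Ω}

lemma prb_mono [IsFiniteMeasure P] (h : E ⊆ F) : prb P E ≤ prb P F :=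
  measureReal_mono h

lemma prb_inter_pos_of_cprb_pos (h : 0 < cprb P E F) : 0 < prb P (F ∩ E) := by
  rw [Set.inter_comm]
  exact ENNReal.toReal_nonneg.lt_of_ne' (div_ne_zero_iff.1 h.ne').1

lemma cprb_congr_ae (h : ∀ᵐ ω ∂P, ω ∈ F → (ω ∈ E ↔ ω ∈ E')) : cprb P E F = cprb P E' F := by
  have hinter : (E ∩ F : Set Ω) =ᵐ[P] (E' ∩ F : Set Ω) :=
    Filter.eventuallyEq_set.2 <| h.mono fun _ hω => and_congr_left hω
  simp only [cprb, prb, measure_congr hinter]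

lemma cprb_compl [IsFiniteMeasure P] (hE : MeasurableSet E) (hF : prb P F ≠ 0) :
    cprb P Eᶜ F = 1 - cprb P E F := by
  have hsplit : prb P (E ∩ F) + prb P (Eᶜ ∩ F) = prb P F := by
    rw [Set.inter_comm E, Set.inter_comm Eᶜ, ← Set.sdiff_eq]
    exact measureReal_inter_add_sdiff hE
  rw [cprb, cprb, eq_sub_iff_add_eq', ← add_div, hsplit, div_self hF]

lemma cprb_false_pos [IsFiniteMeasure P] {A : Ω → Bool} (hA : Measurable A) (hF : prb P F ≠ 0)
    (htrue : cprb P {ω | A ω = true} F < 1) : 0 < cprb P {ω | A ω = false} F := by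
  have hmeas : MeasurableSet {ω | A ω = true} := hA (measurableSet_singleton true)
  have hcompl : {ω | A ω = false} = {ω | A ω = true}ᶜ := by
    ext ω
    simp
  rw [hcompl, cprb_compl hmeas hF]
  exact sub_pos.2 htrue

lemma cexpb_ite_one_zero {p : Ω → Prop} [DecidablePred p] (hp : MeasurableSet {ω | p ω})
    (F : Set Ω) : cexpb P (fun ω => if p ω then (1 : ℝ) else 0) F = cprb P {ω | p ω} F := by
  have hindicator : (fun ω => if p ω then (1 : ℝ) else 0) = {ω | p ω}.indicator 1 := by
    ext ω
    simp [Set.indicator_apply]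
  rw [cexpb, cprb, hindicator, integral_indicator_one hp, measureReal_restrict_apply hp]
  rfl

-- Null conditioning events are covered: both sides are then `0`, by the convention `x / 0 = 0`.
lemma cprb_inter [IsFiniteMeasure P] (E F G : Set Ω) :
    cprb P (E ∩ F) G = cprb P E (G ∩ F) * cprb P F G := by
  have hsub : prb P (E ∩ (F ∩ G)) ≤ prb P (F ∩ G) := prb_mono Set.inter_subset_right
  have hnull : prb P (F ∩ G) = 0 → prb P (E ∩ (F ∩ G)) = 0 := fun h =>
    le_antisymm (hsub.trans_eq h) ENNReal.toReal_nonneg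
  rw [cprb, cprb, cprb, Set.inter_comm G, Set.inter_assoc, ← mul_div_assoc,
    div_mul_cancel_of_imp hnull]

lemma cprb_inter_right_of_condIndep [IsFiniteMeasure P]
    (hindep : cprb P (E ∩ F) G = cprb P E G * cprb P F G) (hF : cprb P F G ≠ 0) :
    cprb P E (G ∩ F) = cprb P E G :=
  mul_right_cancel₀ hF ((cprb_inter E F G).symm.trans hindep)

lemma cprb_bayes [IsFiniteMeasure P] (E F G : Set Ω) :
    cprb P E (G ∩ F) * cprb P F G = cprb P F (G ∩ E) * cprb P E G := by
  rw [← cprb_inter, ← cprb_inter, Set.inter_comm]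

lemma cprb_bayes_odds [IsFiniteMeasure P] (E E' : Set Ω) (hF : cprb P F G ≠ 0) :
    cprb P E (G ∩ F) / cprb P E' (G ∩ F) =
      cprb P F (G ∩ E) / cprb P F (G ∩ E') * (cprb P E G / cprb P E' G) := by
  rw [← mul_div_mul_right (cprb P E _) _ hF, cprb_bayes E, cprb_bayes E', mul_div_mul_comm]

lemma cprb_ne_zero_of_inter_right [IsFiniteMeasure P] (hE : cprb P E G ≠ 0)
    (hF : cprb P F (G ∩ E) ≠ 0) : cprb P F G ≠ 0 :=
  right_ne_zero_of_mul ((cprb_bayes E F G).trans_ne (mul_ne_zero hF hE))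

end ConditionalProbability

section Identification

variable {Ω : Type*} [MeasurableSpace Ω] {P : Measure Ω} [IsFiniteMeasure P]
  {𝓐 𝓨 : Type*} {A0 : Ω → 𝓐} {YK : Ω → 𝓨} {Ycf : 𝓐 → Ω → 𝓨} {a : 𝓐} {y : 𝓨} {G : Set Ω}

lemma cprb_outcome_eq_cprb_counterfactual
    (hcons : ∀ᵐ ω ∂P, A0 ω = a → YK ω = Ycf a ω)
    (hexch : cprb P {ω | Ycf a ω = y ∧ A0 ω = a} G =
      cprb P {ω | Ycf a ω = y} G * cprb P {ω | A0 ω = a} G)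
    (hpos : cprb P {ω | A0 ω = a} G ≠ 0) :
    cprb P {ω | YK ω = y} (G ∩ {ω | A0 ω = a}) = cprb P {ω | Ycf a ω = y} G := by
  have hae : ∀ᵐ ω ∂P, ω ∈ G ∩ {ω | A0 ω = a} → (YK ω = y ↔ Ycf a ω = y) :=
    hcons.mono fun ω hω hmem => by rw [hω hmem.2]
  exact (cprb_congr_ae hae).trans (cprb_inter_right_of_condIndep hexch hpos)

end Identification

theorem caseBase_conditional_ITT_riskRatio_general
    {Ω : Type*} [MeasurableSpace Ω] (P : Measure Ω) [IsFiniteMeasure P]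
    {𝓛 𝓐 𝓨 : Type*} [DecidableEq 𝓐] [MeasurableSpace 𝓐] [MeasurableSingletonClass 𝓐]
    (L0 : Ω → 𝓛) (A0 : Ω → 𝓐) (YK : Ω → 𝓨) (S : Ω → Bool) (Ycf : 𝓐 → Ω → 𝓨)
    (hA0 : Measurable A0) (l : 𝓛) (y : 𝓨) (a₁ a₀ : 𝓐) (δ : ℝ) (hδ : 0 < δ)
    (hS : ∀ a, 0 < prb P {ω | L0 ω = l ∧ A0 ω = a} →
      cprb P {ω | S ω = true} {ω | L0 ω = l ∧ A0 ω = a} = δ)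
    (hcons : ∀ a, ∀ᵐ ω ∂P, A0 ω = a → YK ω = Ycf a ω)
    (hexch : ∀ a, cprb P {ω | Ycf a ω = y ∧ A0 ω = a} {ω | L0 ω = l} =
      cprb P {ω | Ycf a ω = y} {ω | L0 ω = l} * cprb P {ω | A0 ω = a} {ω | L0 ω = l})
    (hpos₁ : 0 < cprb P {ω | A0 ω = a₁} {ω | L0 ω = l})
    (hpos₀ : 0 < cprb P {ω | A0 ω = a₀} {ω | L0 ω = l})
    (hY₀ : 0 < cprb P {ω | Ycf a₀ ω = y} {ω | L0 ω = l}) :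
    (cexpb P (fun ω => if A0 ω = a₁ then (1 : ℝ) else 0) ({ω | L0 ω = l} ∩ {ω | YK ω = y}) /
      cexpb P (fun ω => if A0 ω = a₀ then (1 : ℝ) else 0) ({ω | L0 ω = l} ∩ {ω | YK ω = y})) /
    (cexpb P (fun ω => if A0 ω = a₁ then (1 : ℝ) else 0) ({ω | L0 ω = l} ∩ {ω | S ω = true}) /
      cexpb P (fun ω => if A0 ω = a₀ then (1 : ℝ) else 0) ({ω | L0 ω = l} ∩ {ω | S ω = true})) =
    cprb P {ω | Ycf a₁ ω = y} {ω | L0 ω = l} / cprb P {ω | Ycf a₀ ω = y} {ω | L0 ω = l} := by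
  have hrisk (a : 𝓐) (hpos : 0 < cprb P {ω | A0 ω = a} {ω | L0 ω = l}) :
      cprb P {ω | YK ω = y} ({ω | L0 ω = l} ∩ {ω | A0 ω = a}) =
        cprb P {ω | Ycf a ω = y} {ω | L0 ω = l} :=
    cprb_outcome_eq_cprb_counterfactual (hcons a) (hexch a) hpos.ne'
  have hsampled (a : 𝓐) (hpos : 0 < cprb P {ω | A0 ω = a} {ω | L0 ω = l}) :
      cprb P {ω | S ω = true} ({ω | L0 ω = l} ∩ {ω | A0 ω = a}) = δ :=
    hS a (prb_inter_pos_of_cprb_pos hpos)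
  have hcase : cprb P {ω | YK ω = y} {ω | L0 ω = l} ≠ 0 :=
    cprb_ne_zero_of_inter_right hpos₀.ne' (hrisk a₀ hpos₀ ▸ hY₀.ne')
  have hbase : cprb P {ω | S ω = true} {ω | L0 ω = l} ≠ 0 :=
    cprb_ne_zero_of_inter_right hpos₀.ne' (hsampled a₀ hpos₀ ▸ hδ.ne')
  have hodds : cprb P {ω | A0 ω = a₁} {ω | L0 ω = l} / cprb P {ω | A0 ω = a₀} {ω | L0 ω = l} ≠ 0 :=
    (div_pos hpos₁ hpos₀).ne'
  have harm (a : 𝓐) : MeasurableSet {ω | A0 ω = a} := hA0 (measurableSet_singleton a)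
  simp only [cexpb_ite_one_zero (harm _)]
  rw [cprb_bayes_odds _ _ hcase, cprb_bayes_odds _ _ hbase, mul_div_mul_right _ _ hodds,
    hrisk a₁ hpos₁, hrisk a₀ hpos₀, hsampled a₁ hpos₁, hsampled a₀ hpos₀, div_self hδ.ne', div_one]

/-- Theorem B2: case-base sampling identifies the conditional intention-to-treat
risk ratio. -/
theorem caseBase_conditional_ITT_riskRatio
    {Ω : Type*} [MeasurableSpace Ω] (P : Measure Ω) [IsProbabilityMeasure P]
    {𝓛 : Type*} [Fintype 𝓛] [MeasurableSpace 𝓛]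
    (L0 : Ω → 𝓛) (A0 YK S : Ω → Bool) (Ycf : Bool → Ω → Bool)
    (hL0 : Measurable L0) (hA0 : Measurable A0) (hYK : Measurable YK)
    (hS : Measurable S) (hYcf : ∀ a, Measurable (Ycf a))
    -- covariate-dependent sampling fractions
    (δ : 𝓛 → ℝ) (hδpos : ∀ l, 0 < δ l) (hδle : ∀ l, δ l ≤ 1)
    (hS1 : ∀ (l : 𝓛) (a : Bool), 0 < prb P {ω | L0 ω = l ∧ A0 ω = a} →
      cprb P {ω | S ω = true} {ω | L0 ω = l ∧ A0 ω = a} = δ l)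
    -- consistency
    (hcons : ∀ a : Bool, ∀ᵐ ω ∂P, A0 ω = a → YK ω = Ycf a ω)
    -- baseline conditional exchangeability
    (hBCE : ∀ (a : Bool) (l : 𝓛), 0 < prb P {ω | L0 ω = l} → ∀ (y a' : Bool),
      cprb P {ω | Ycf a ω = y ∧ A0 ω = a'} {ω | L0 ω = l} =
        cprb P {ω | Ycf a ω = y} {ω | L0 ω = l} *
          cprb P {ω | A0 ω = a'} {ω | L0 ω = l})
    -- positivity
    (hpos : ∀ l : 𝓛, 0 < prb P {ω | L0 ω = l} →
      0 < cprb P {ω | A0 ω = true} {ω | L0 ω = l} ∧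
        cprb P {ω | A0 ω = true} {ω | L0 ω = l} < 1)
    -- the fixed covariate level l
    (l : 𝓛)
    (hlY : 0 < prb P {ω | L0 ω = l ∧ YK ω = true})
    (hlS : 0 < prb P {ω | L0 ω = l ∧ S ω = true})
    (hlY0 : 0 < cprb P {ω | Ycf false ω = true} {ω | L0 ω = l}) :
    (cexpb P (fun ω => if A0 ω = true then (1:ℝ) else 0)
        ({ω | L0 ω = l} ∩ {ω | YK ω = true}) /
      cexpb P (fun ω => if A0 ω = false then (1:ℝ) else 0)
        ({ω | L0 ω = l} ∩ {ω | YK ω = true})) /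
    (cexpb P (fun ω => if A0 ω = true then (1:ℝ) else 0)
        ({ω | L0 ω = l} ∩ {ω | S ω = true}) /
      cexpb P (fun ω => if A0 ω = false then (1:ℝ) else 0)
        ({ω | L0 ω = l} ∩ {ω | S ω = true})) =
    cprb P {ω | Ycf true ω = true} {ω | L0 ω = l} /
      cprb P {ω | Ycf false ω = true} {ω | L0 ω = l} := by
  have hl : 0 < prb P {ω | L0 ω = l} := hlY.trans_le (prb_mono fun _ hω => hω.1)
  exact caseBase_conditional_ITT_riskRatio_general P L0 A0 YK S Ycf hA0 l true true false (δ l)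
    (hδpos l) (hS1 l) hcons (fun a => hBCE a l hl true a) (hpos l hl).1
    (cprb_false_pos hA0 hl.ne' (hpos l hl).2) hlY0
end

section
/- Nonidentifiability of the marginal odds ratio under survivor sampling (Remark to Theorem B3). There exist two probability distributions P1 and P2 for a quadruple (L0, A0, Y_K, S) of {0,1}-valued random variables such that: (i) under both distributions, for some constant δ ∈ (0,1], P(S=1 | L0, A0, Y_K) = δ·(1−Y_K) (condition S2*); (ii) both distributions induce exactly the same conditional distribution of (L0, A0, Y_K, S) given the event {Y_K=1 or S=1} (the available case-control data distribution); and yet (iii) the g-formula marginal odds ratio Odds_g(1)/Odds_g(0), where for a ∈ {0,1}, p(a) := Σ_{l∈{0,1}} P(Y_K=1 | L0=l, A0=a)·P(L0=l) and Odds_g(a) := p(a)/(1−p(a)), takes the value 587791/167166 under P1 and the value 512539/148789 under P2; in particular these two values differ. Concretely, one may take both distributions to have the conditional structure Y_K ~ Bernoulli(α), S | Y_K ~ Bernoulli(δ(1−Y_K)), L0 | Y_K ~ Bernoulli(5/10 − (2/10)Y_K), A0 | L0, Y_K ~ Bernoulli(3/10 + (2/10)L0 + (3/10)Y_K), with (α,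 δ) = (1/10, 1/10) under P1 and (α, δ) = (2/10, 9/40) under P2. -/
open MeasureTheory

/-- The sample space for one observation `(L0, A0, Y_K, S)` with values in `{0,1}⁴`. -/
abbrev CCSpace : Type := Bool × Bool × Bool × Bool

/-- Bernoulli point mass: `bern p b = p` if `b` and `1 − p` otherwise. -/
def bern (p : ℝ) (b : Bool) : ℝ := if b then p else 1 - p

/-- The joint point mass of `(L0, A0, Y_K, S)` determined by the conditional structure
`Y_K ~ Bernoulli(α)`, `S | Y_K ~ Bernoulli(δ(1−Y_K))`,
`L0 | Y_K ~ Bernoulli(5/10 − (2/10)Y_K)`,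
`A0 | L0, Y_K ~ Bernoulli(3/10 + (2/10)L0 + (3/10)Y_K)`. -/
noncomputable def ccJoint (α δ : ℝ) (x : CCSpace) : ℝ :=
  bern α x.2.2.1 * bern (δ * (1 - (if x.2.2.1 then (1:ℝ) else 0))) x.2.2.2 *
    bern (5/10 - 2/10 * (if x.2.2.1 then (1:ℝ) else 0)) x.1 *
    bern (3/10 + 2/10 * (if x.1 then (1:ℝ) else 0)
      + 3/10 * (if x.2.2.1 then (1:ℝ) else 0)) x.2.1

/-- The g-formula risk `p(a) = Σ_l P(Y_K=1 | L0=l, A0=a) · P(L0=l)`. -/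
noncomputable def gRisk (P : Measure CCSpace) (a : Bool) : ℝ :=
  ∑ l : Bool,
    cprb P {ω | ω.2.2.1 = true} {ω | ω.1 = l ∧ ω.2.1 = a} * prb P {ω | ω.1 = l}

/-- The g-formula odds `Odds_g(a) = p(a)/(1−p(a))`. -/
noncomputable def gOdds (P : Measure CCSpace) (a : Bool) : ℝ :=
  gRisk P a / (1 - gRisk P a)

/-- Condition S2*: `P(S=1 | L0, A0, Y_K) = δ·(1−Y_K)` for some constant `δ ∈ (0,1]`. -/
def SurvivorSampling (P : Measure CCSpace) : Prop :=
  ∃ δ : ℝ, 0 < δ ∧ δ ≤ 1 ∧ ∀ l a y : Bool,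
    0 < prb P {ω | ω.1 = l ∧ ω.2.1 = a ∧ ω.2.2.1 = y} →
    cprb P {ω | ω.2.2.2 = true} {ω | ω.1 = l ∧ ω.2.1 = a ∧ ω.2.2.1 = y} =
      δ * (1 - (if y = true then (1:ℝ) else 0))

/-!
The law of the data given selection depends on `(α, δ)` only through the odds `α : (1 - α) δ` of
cases to sampled controls, since `(L0, A0)` is independent of `S` given `Y_K`. The g-formula risk,
by contrast, is a function of `α` alone, because `S` is irrelevant to it. The parameters
`(1/10, 1/10)` and `(2/10, 9/40)` share the odds `10 : 9` but differ in `α`.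
-/

section FiniteSpace

variable {Ω : Type*} [MeasurableSpace Ω] [MeasurableSingletonClass Ω]

lemma exists_isProbabilityMeasure_prb_singleton [Fintype Ω] {w : Ω → ℝ} (w_nonneg : ∀ x, 0 ≤ w x)
    (sum_w : ∑ x, w x = 1) :
    ∃ P : Measure Ω, IsProbabilityMeasure P ∧ ∀ x, prb P {x} = w x := by
  have sum_ofReal : ∑ x, ENNReal.ofReal (w x) = 1 := by
    rw [← ENNReal.ofReal_sum_of_nonneg fun x _ => w_nonneg x, sum_w, ENNReal.ofReal_one]
  let p : PMF Ω := PMF.ofFintype (fun x => ENNReal.ofReal (w x)) sum_ofReal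
  refine ⟨p.toMeasure, inferInstance, fun x => ?_⟩
  rw [prb, p.toMeasure_apply_singleton x (measurableSet_singleton x), PMF.ofFintype_apply,
    ENNReal.toReal_ofReal (w_nonneg x)]

lemma prb_eq_sum_singleton [Fintype Ω] (P : Measure Ω) [IsFiniteMeasure P] (E : Set Ω)
    [DecidablePred (· ∈ E)] : prb P E = ∑ x with x ∈ E, prb P {x} := by
  have coe_filter : ((Finset.univ.filter (· ∈ E) : Finset Ω) : Set Ω) = E := by simp
  calc prb P E = P.real ↑(Finset.univ.filter (· ∈ E)) := by rw [coe_filter]; rfl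
    _ = ∑ x with x ∈ E, prb P {x} := (sum_measureReal_singleton _).symm

lemma prb_eq_mul_of_proportional [Finite Ω] {P Q : Measure Ω} [IsFiniteMeasure P]
    [IsFiniteMeasure Q] {c : ℝ} {E : Set Ω} (proportional : ∀ x ∈ E, prb P {x} = c * prb Q {x}) :
    prb P E = c * prb Q E := by
  classical
  have := Fintype.ofFinite Ω
  rw [prb_eq_sum_singleton P, prb_eq_sum_singleton Q, Finset.mul_sum]
  exact Finset.sum_congr rfl fun x hx => proportional x (Finset.mem_filter.mp hx).2

lemma cprb_eq_of_proportional [Finite Ω] {P Q : Measure Ω} [IsFiniteMeasure P]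
    [IsFiniteMeasure Q] {c : ℝ} (hc : c ≠ 0) {F : Set Ω}
    (proportional : ∀ x ∈ F, prb P {x} = c * prb Q {x}) (E : Set Ω) :
    cprb P E F = cprb Q E F := by
  rw [cprb, cprb, prb_eq_mul_of_proportional proportional,
    prb_eq_mul_of_proportional fun x (hx : x ∈ E ∩ F) => proportional x hx.2,
    mul_div_mul_left _ _ hc]

end FiniteSpace

lemma bern_nonneg {p : ℝ} (hp : p ∈ Set.Icc 0 1) (b : Bool) : 0 ≤ bern p b := by
  cases b
  · exact sub_nonneg.mpr hp.2
  · exact hp.1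

lemma sum_bern (p : ℝ) : ∑ b, bern p b = 1 := by
  simp [bern]

/-- The joint point mass of `(L0, A0, Y_K, S)` when `Y_K ~ Bernoulli(α)`,
`S | Y_K ~ Bernoulli(δ(1−Y_K))` is conditionally independent of `(L0, A0)`, and `q y l a` is the
conditional mass of `(L0, A0) = (l, a)` given `Y_K = y`. No normalisation of `q` is built in. -/
noncomputable def survivorJoint (α δ : ℝ) (q : Bool → Bool → Bool → ℝ) (x : CCSpace) : ℝ :=
  bern α x.2.2.1 * bern (δ * (1 - (if x.2.2.1 then (1 : ℝ) else 0))) x.2.2.2 *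
    q x.2.2.1 x.1 x.2.1

section SurvivorJoint

variable {α δ : ℝ} {q : Bool → Bool → Bool → ℝ}

lemma survivorJoint_nonneg (hα : α ∈ Set.Icc 0 1) (hδ : δ ∈ Set.Icc 0 1)
    (q_nonneg : ∀ y l a, 0 ≤ q y l a) (x : CCSpace) : 0 ≤ survivorJoint α δ q x := by
  have sampling_mem : δ * (1 - (if x.2.2.1 then (1 : ℝ) else 0)) ∈ Set.Icc 0 1 := by
    split_ifs
    · simp
    · simpa using hδ
  exact mul_nonneg (mul_nonneg (bern_nonneg hα _) (bern_nonneg sampling_mem _)) (q_nonneg _ _ _)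

lemma sum_sampling_survivorJoint (l a y : Bool) :
    ∑ s, survivorJoint α δ q (l, a, y, s) = bern α y * q y l a := by
  calc ∑ s, survivorJoint α δ q (l, a, y, s)
      = ∑ s, bern α y * bern (δ * (1 - (if y then (1 : ℝ) else 0))) s * q y l a := rfl
    _ = bern α y * q y l a := by
        rw [← Finset.sum_mul, ← Finset.mul_sum, sum_bern, mul_one]

lemma sum_survivorJoint (sum_q : ∀ y, ∑ l, ∑ a, q y l a = 1) :
    ∑ x, survivorJoint α δ q x = 1 := by
  calc ∑ x, survivorJoint α δ q x = ∑ l, ∑ a, ∑ y, bern α y * q y l a := by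
        simp only [Fintype.sum_prod_type, sum_sampling_survivorJoint]
    _ = ∑ y, bern α y * ∑ l, ∑ a, q y l a := by
        simp only [Fintype.sum_bool]; ring
    _ = 1 := by simp only [sum_q, mul_one, sum_bern]

lemma survivorJoint_eq_mul_of_selected {α' δ' c : ℝ} (case_mass : α = c * α')
    (control_mass : (1 - α) * δ = c * ((1 - α') * δ')) {x : CCSpace}
    (selected : x.2.2.1 = true ∨ x.2.2.2 = true) :
    survivorJoint α δ q x = c * survivorJoint α' δ' q x := by
  obtain ⟨l, a, y, s⟩ := x
  cases y
  · obtain rfl : s = true := by simpa using selected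
    simp [survivorJoint, bern, control_mass, mul_assoc]
  · simp [survivorJoint, bern, case_mass, mul_assoc]

variable {P : Measure CCSpace} [IsFiniteMeasure P]

lemma cprb_selected_eq_of_prb_singleton {α' δ' : ℝ} {Q : Measure CCSpace} [IsFiniteMeasure Q]
    (hα : α ≠ 0) (hα' : α' ≠ 0) (equal_odds : α * ((1 - α') * δ') = α' * ((1 - α) * δ))
    (hP : ∀ x, prb P {x} = survivorJoint α δ q x)
    (hQ : ∀ x, prb Q {x} = survivorJoint α' δ' q x) (E : Set CCSpace) :
    cprb P E {ω | ω.2.2.1 = true ∨ ω.2.2.2 = true} =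
      cprb Q E {ω | ω.2.2.1 = true ∨ ω.2.2.2 = true} := by
  have case_mass : α = α / α' * α' := (div_mul_cancel₀ α hα').symm
  have control_mass : (1 - α) * δ = α / α' * ((1 - α') * δ') := by
    rw [div_mul_eq_mul_div, equal_odds, mul_div_cancel_left₀ _ hα']
  refine cprb_eq_of_proportional (div_ne_zero hα hα') (fun x selected => ?_) E
  rw [hP, hQ, survivorJoint_eq_mul_of_selected case_mass control_mass selected]

lemma prb_setOf_eq_sum (hP : ∀ x, prb P {x} = survivorJoint α δ q x)
    (p : Bool → Bool → Bool → Prop) [∀ l a y, Decidable (p l a y)] :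
    prb P {ω | p ω.1 ω.2.1 ω.2.2.1} =
      ∑ l, ∑ a, ∑ y, if p l a y then bern α y * q y l a else 0 := by
  classical
  rw [prb_eq_sum_singleton]
  simp only [hP, Finset.sum_filter, Fintype.sum_prod_type, Set.mem_ofPred_eq]
  refine Finset.sum_congr rfl fun l _ => Finset.sum_congr rfl fun a _ =>
    Finset.sum_congr rfl fun y _ => ?_
  split_ifs
  · exact sum_sampling_survivorJoint l a y
  · exact Finset.sum_const_zero

lemma prb_setOf_covariate_exposure_outcome (hP : ∀ x, prb P {x} = survivorJoint α δ q x)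
    (l a y : Bool) :
    prb P {ω | ω.1 = l ∧ ω.2.1 = a ∧ ω.2.2.1 = y} = bern α y * q y l a := by
  rw [prb_setOf_eq_sum hP fun l' a' y' => l' = l ∧ a' = a ∧ y' = y]
  simp [ite_and]

lemma prb_setOf_covariate_exposure (hP : ∀ x, prb P {x} = survivorJoint α δ q x)
    (l a : Bool) :
    prb P {ω | ω.1 = l ∧ ω.2.1 = a} = ∑ y, bern α y * q y l a := by
  rw [prb_setOf_eq_sum hP fun l' a' _ => l' = l ∧ a' = a]
  simp only [ite_and, Finset.sum_ite_irrel, Finset.sum_const_zero, Finset.sum_ite_eq',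
    Finset.mem_univ, if_true]

lemma prb_setOf_covariate (hP : ∀ x, prb P {x} = survivorJoint α δ q x) (l : Bool) :
    prb P {ω | ω.1 = l} = ∑ a, ∑ y, bern α y * q y l a := by
  rw [prb_setOf_eq_sum hP fun l' _ _ => l' = l]
  simp only [Finset.sum_ite_irrel, Finset.sum_const_zero, Finset.sum_ite_eq',
    Finset.mem_univ, if_true]

lemma survivorSampling_of_prb_singleton (hδ : δ ∈ Set.Ioc 0 1)
    (hP : ∀ x, prb P {x} = survivorJoint α δ q x) : SurvivorSampling P := by
  refine ⟨δ, hδ.1, hδ.2, fun l a y stratum_pos => ?_⟩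
  have sampled_stratum : {ω : CCSpace | ω.2.2.2 = true} ∩
      {ω | ω.1 = l ∧ ω.2.1 = a ∧ ω.2.2.1 = y} = {(l, a, y, true)} := by
    ext ⟨l', a', y', s'⟩
    simp only [Set.mem_inter_iff, Set.mem_ofPred_eq, Set.mem_singleton_iff, Prod.mk.injEq]
    tauto
  rw [cprb, div_eq_iff stratum_pos.ne', sampled_stratum, hP,
    prb_setOf_covariate_exposure_outcome hP]
  simp only [survivorJoint, bern, if_true]
  ring

lemma gRisk_eq_of_prb_singleton (hP : ∀ x, prb P {x} = survivorJoint α δ q x) (a : Bool) :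
    gRisk P a = ∑ l, bern α true * q true l a / (∑ y, bern α y * q y l a) *
      ∑ a', ∑ y, bern α y * q y l a' := by
  have case_stratum (l : Bool) : {ω : CCSpace | ω.2.2.1 = true} ∩ {ω | ω.1 = l ∧ ω.2.1 = a} =
      {ω | ω.1 = l ∧ ω.2.1 = a ∧ ω.2.2.1 = true} := by
    ext ω
    simp only [Set.mem_inter_iff, Set.mem_ofPred_eq]
    tauto
  simp only [gRisk, cprb, case_stratum, prb_setOf_covariate_exposure_outcome hP,
    prb_setOf_covariate_exposure hP, prb_setOf_covariate hP]

end SurvivorJoint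

/-- The conditional mass of `(L0, A0) = (l, a)` given `Y_K = y` in the counterexample, i.e. the
last two factors of `ccJoint`. -/
noncomputable def ccCovariateExposure (y l a : Bool) : ℝ :=
  bern (5 / 10 - 2 / 10 * (if y then (1 : ℝ) else 0)) l *
    bern (3 / 10 + 2 / 10 * (if l then (1 : ℝ) else 0) + 3 / 10 * (if y then (1 : ℝ) else 0)) a

lemma ccCovariateExposure_nonneg (y l a : Bool) : 0 ≤ ccCovariateExposure y l a := by
  refine mul_nonneg (bern_nonneg ?_ l) (bern_nonneg ?_ a) <;>
    cases y <;> cases l <;> norm_num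

lemma sum_ccCovariateExposure (y : Bool) : ∑ l, ∑ a, ccCovariateExposure y l a = 1 := by
  simp only [ccCovariateExposure, ← Finset.mul_sum, sum_bern, mul_one]

lemma ccJoint_eq_survivorJoint (α δ : ℝ) : ccJoint α δ = survivorJoint α δ ccCovariateExposure :=
  funext fun _ => mul_assoc _ _ _

lemma exists_isProbabilityMeasure_ccJoint {α δ : ℝ} (hα : α ∈ Set.Icc 0 1)
    (hδ : δ ∈ Set.Icc 0 1) :
    ∃ P : Measure CCSpace, IsProbabilityMeasure P ∧ ∀ x, prb P {x} = ccJoint α δ x := by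
  rw [ccJoint_eq_survivorJoint]
  exact exists_isProbabilityMeasure_prb_singleton
    (survivorJoint_nonneg hα hδ ccCovariateExposure_nonneg)
    (sum_survivorJoint sum_ccCovariateExposure)

section CCJoint

variable {α δ : ℝ} {P : Measure CCSpace} [IsFiniteMeasure P]

lemma gRisk_true_of_ccJoint (hP : ∀ x, prb P {x} = ccJoint α δ x) :
    gRisk P true = 24 * α / (25 - α) * (1 / 2 - α / 5) +
      14 * α / (5 + 9 * α) * (1 / 2 + α / 5) := by
  have posterior_covariate_true : α * (6 / 25) / (α * (6 / 25) + (1 - α) * (1 / 4)) =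
      24 * α / (25 - α) := by
    rw [← mul_div_mul_left _ _ (by norm_num : (100 : ℝ) ≠ 0)]
    ring_nf
  have posterior_covariate_false : α * (21 / 50) / (α * (21 / 50) + (1 - α) * (3 / 20)) =
      14 * α / (5 + 9 * α) := by
    rw [← mul_div_mul_left _ _ (by norm_num : (100 / 3 : ℝ) ≠ 0)]
    ring_nf
  rw [gRisk_eq_of_prb_singleton (ccJoint_eq_survivorJoint α δ ▸ hP),
    ← posterior_covariate_true, ← posterior_covariate_false]
  simp only [Fintype.sum_bool, ccCovariateExposure, bern, if_true, if_false, Bool.false_eq_true]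
  ring

lemma gRisk_false_of_ccJoint (hP : ∀ x, prb P {x} = ccJoint α δ x) :
    gRisk P false = 6 * α / (25 - 19 * α) * (1 / 2 - α / 5) +
      4 * α / (5 - α) * (1 / 2 + α / 5) := by
  have posterior_covariate_true : α * (3 / 50) / (α * (3 / 50) + (1 - α) * (1 / 4)) =
      6 * α / (25 - 19 * α) := by
    rw [← mul_div_mul_left _ _ (by norm_num : (100 : ℝ) ≠ 0)]
    ring_nf
  have posterior_covariate_false : α * (7 / 25) / (α * (7 / 25) + (1 - α) * (7 / 20)) =
      4 * α / (5 - α) := by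
    rw [← mul_div_mul_left _ _ (by norm_num : (100 / 7 : ℝ) ≠ 0)]
    ring_nf
  rw [gRisk_eq_of_prb_singleton (ccJoint_eq_survivorJoint α δ ▸ hP),
    ← posterior_covariate_true, ← posterior_covariate_false]
  simp only [Fintype.sum_bool, ccCovariateExposure, bern, if_true, if_false, Bool.false_eq_true]
  ring

lemma oddsRatio_of_ccJoint_one_tenth (hP : ∀ x, prb P {x} = ccJoint (1 / 10) δ x) :
    gOdds P true / gOdds P false = 587791 / 167166 := by
  rw [gOdds, gOdds, gRisk_true_of_ccJoint hP, gRisk_false_of_ccJoint hP]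
  norm_num

lemma oddsRatio_of_ccJoint_two_tenths (hP : ∀ x, prb P {x} = ccJoint (2 / 10) δ x) :
    gOdds P true / gOdds P false = 512539 / 148789 := by
  rw [gOdds, gOdds, gRisk_true_of_ccJoint hP, gRisk_false_of_ccJoint hP]
  norm_num

end CCJoint

/-- Remark to Theorem B3: the marginal g-formula odds ratio is not identified from the
available case-control data distribution under survivor sampling. There exist two
probability laws of `(L0, A0, Y_K, S)` — concretely, those with the stated Bernoulli
conditional structure, with `(α, δ) = (1/10, 1/10)` and `(α, δ) = (2/10, 9/40)`
respectively — that satisfy S2*, induce the same conditional distribution given the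
selection event `{Y_K=1 ∨ S=1}`, and yet have different g-formula marginal odds
ratios (`587791/167166` vs. `512539/148789`). -/
theorem survivor_marginal_oddsRatio_nonidentifiable :
    ∃ P1 P2 : Measure CCSpace,
      IsProbabilityMeasure P1 ∧ IsProbabilityMeasure P2 ∧
      (∀ x : CCSpace, prb P1 {x} = ccJoint (1/10) (1/10) x) ∧
      (∀ x : CCSpace, prb P2 {x} = ccJoint (2/10) (9/40) x) ∧
      SurvivorSampling P1 ∧ SurvivorSampling P2 ∧
      (∀ x : CCSpace,
        cprb P1 {x} {ω | ω.2.2.1 = true ∨ ω.2.2.2 = true} =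
          cprb P2 {x} {ω | ω.2.2.1 = true ∨ ω.2.2.2 = true}) ∧
      gOdds P1 true / gOdds P1 false = 587791 / 167166 ∧
      gOdds P2 true / gOdds P2 false = 512539 / 148789 ∧
      gOdds P1 true / gOdds P1 false ≠ gOdds P2 true / gOdds P2 false := by
  obtain ⟨P1, isProb1, mass1⟩ := exists_isProbabilityMeasure_ccJoint
    (α := 1/10) (δ := 1/10) (by norm_num) (by norm_num)
  obtain ⟨P2, isProb2, mass2⟩ := exists_isProbabilityMeasure_ccJoint
    (α := 2/10) (δ := 9/40) (by norm_num) (by norm_num)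
  have survivor1 := ccJoint_eq_survivorJoint (1/10) (1/10) ▸ mass1
  have survivor2 := ccJoint_eq_survivorJoint (2/10) (9/40) ▸ mass2
  have oddsRatio1 := oddsRatio_of_ccJoint_one_tenth mass1
  have oddsRatio2 := oddsRatio_of_ccJoint_two_tenths mass2
  refine ⟨P1, P2, isProb1, isProb2, mass1, mass2,
    survivorSampling_of_prb_singleton (by norm_num) survivor1,
    survivorSampling_of_prb_singleton (by norm_num) survivor2,
    fun x => cprb_selected_eq_of_prb_singleton (by norm_num) (by norm_num) (by norm_num)
      survivor1 survivor2 {x},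
    oddsRatio1, oddsRatio2, ?_⟩
  rw [oddsRatio1, oddsRatio2]
  norm_num
end

section
/- Risk-set sampling identifies the conditional intention-to-treat hazard ratio (Theorem B5). Assume there are constants δ_l ∈ (0,1] such that for each k = 0,…,K−1, P(S_k=1 | L0=l, A0=a, Y_k=y) = δ_l·(1−y) for all l, a, y with P(L0=l, A0=a, Y_k=y) > 0. Assume consistency, BCE, positivity, and the homogeneity condition H3: there are constants θ_0, θ_1 with θ_0 ≠ 0 such that P(Y_{k+1}(a)=1 | L0=l, Y_k(a)=0) = θ_a for a = 0,1, all k = 0,…,K−1, and all l with P(L0=l, Y_k(a)=0) > 0. Fix l with P(L0=l, Y_K=1) > 0 and such that all displayed ratios have nonzero denominators. Then ( E[1{A0=1} | L0=l, Y_K=1] / E[1{A0=0} | L0=l, Y_K=1] ) / ( E[1{A0=1}·Σ_{k=0}^{K−1} S_k | L0=l] / E[1{A0=0}·Σ_{k=0}^{K−1} S_k | L0=l] ) = θ_1/θ_0, which equals P(Y_{k+1}(1)=1 | L0=l, Y_k(1)=0) / P(Y_{k+1}(0)=1 | L0=l, Y_k(0)=0) for every k. -/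
open MeasureTheory

/-!
Conditioning on the stratum `F = {L0 = l}` removes the covariate: under `P[|F]` the exposure is
independent of the counterfactual histories, so by consistency the observed hazard in arm `a` is
the constant counterfactual hazard `θ a`. Every case is incident at exactly one time, hence the
probability of being a case in arm `a` is `θ a` times the expected person-time at risk of that arm.
Controls are drawn from those at risk with the same fraction `δ` at every time, so the expected
number of controls in arm `a` is `δ` times the same person-time. In the ratio of the two odds the
person-times and `δ` cancel.
-/

open ProbabilityTheory

section ConditionalProbability

variable {Ω : Type*} [MeasurableSpace Ω] {P : Measure Ω} {E F G : Set Ω}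

lemma cprb_eq_measureReal_cond (hE : MeasurableSet E) : cprb P E F = P[|F].real E := by
  rw [measureReal_def, cond_apply' hE, ENNReal.toReal_mul, ENNReal.toReal_inv, Set.inter_comm,
    mul_comm, ← div_eq_mul_inv, cprb, prb, prb]

lemma cexpb_eq_integral_cond (X : Ω → ℝ) : cexpb P X F = ∫ ω, X ω ∂P[|F] := by
  rw [ProbabilityTheory.cond, integral_smul_measure, ENNReal.toReal_inv, smul_eq_mul, mul_comm,
    ← div_eq_mul_inv, cexpb, prb]

lemma cprb_inter_eq_cprb_cond [IsFiniteMeasure P] (hE : MeasurableSet E) (hG : MeasurableSet G) :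
    cprb P E (F ∩ G) = cprb P[|F] E G := by
  have hEG : E ∩ G ∩ F = E ∩ (F ∩ G) := by rw [Set.inter_assoc, Set.inter_comm G]
  have hcond : cprb P[|F] E G =
      (prb P (E ∩ (F ∩ G)) / prb P F) / (prb P (F ∩ G) / prb P F) := by
    rw [cprb, prb, prb, ← measureReal_def, ← measureReal_def,
      ← cprb_eq_measureReal_cond (hE.inter hG), ← cprb_eq_measureReal_cond hG, cprb, cprb, hEG,
      Set.inter_comm G]
  rw [hcond, cprb]
  rcases eq_or_ne (prb P F) 0 with hF | hF
  · have hFG : prb P (F ∩ G) = 0 := measureReal_mono_null Set.inter_subset_left hF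
    rw [hFG, hF, div_zero, div_zero, div_zero]
  · rw [div_div_div_cancel_right₀ hF]

lemma measureReal_cond_inter_of_cprb_eq [IsFiniteMeasure P] (hE : MeasurableSet E)
    (hG : MeasurableSet G) {c : ℝ} (h : 0 < prb P (F ∩ G) → cprb P E (F ∩ G) = c) :
    P[|F].real (E ∩ G) = c * P[|F].real G := by
  rcases eq_or_ne (P[|F].real G) 0 with hG0 | hG0
  · rw [hG0, mul_zero, measureReal_mono_null Set.inter_subset_right hG0]
  have hFG : 0 < prb P (F ∩ G) := by
    refine measureReal_nonneg.lt_of_ne' fun hFG0 : prb P (F ∩ G) = 0 => hG0 ?_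
    rw [← cprb_eq_measureReal_cond hG, cprb, Set.inter_comm, hFG0, zero_div]
  rw [← div_eq_iff hG0, ← h hFG, cprb_inter_eq_cprb_cond hE hG]
  rfl

lemma indepSet_cond_iff_cprb_inter_eq_mul {B : Set Ω} (hE : MeasurableSet E)
    (hB : MeasurableSet B) :
    IndepSet E B P[|F] ↔ cprb P (E ∩ B) F = cprb P E F * cprb P B F := by
  rw [indepSet_iff_measure_inter_eq_mul hE hB P[|F], cprb_eq_measureReal_cond (hE.inter hB),
    cprb_eq_measureReal_cond hE, cprb_eq_measureReal_cond hB, measureReal_def, measureReal_def,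
    measureReal_def, ← ENNReal.toReal_mul, ENNReal.toReal_eq_toReal_iff' (by finiteness)
    (by finiteness)]

end ConditionalProbability

section Expectation

variable {Ω : Type*} [MeasurableSpace Ω] {μ : Measure Ω}

lemma ite_one_zero_eq_indicator {α M : Type*} [Zero M] [One M] (p : α → Prop) [DecidablePred p] :
    (fun x => if p x then (1 : M) else 0) = {x | p x}.indicator 1 := by
  ext x
  simp [Set.indicator_apply]

lemma integral_ite_one_zero {p : Ω → Prop} [DecidablePred p] (hp : MeasurableSet {ω | p ω}) :
    ∫ ω, (if p ω then (1 : ℝ) else 0) ∂μ = μ.real {ω | p ω} := by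
  rw [ite_one_zero_eq_indicator, integral_indicator_one hp]

lemma integral_ite_mul_sum_ite [IsFiniteMeasure μ] {ι : Type*} (s : Finset ι) {p : Ω → Prop}
    [DecidablePred p] {q : ι → Ω → Prop} [∀ i, DecidablePred (q i)]
    (hp : MeasurableSet {ω | p ω}) (hq : ∀ i, MeasurableSet {ω | q i ω}) :
    ∫ ω, (if p ω then (1 : ℝ) else 0) * (∑ i ∈ s, if q i ω then (1 : ℝ) else 0) ∂μ =
      ∑ i ∈ s, μ.real ({ω | p ω} ∩ {ω | q i ω}) := by
  simp only [Finset.mul_sum, ite_zero_mul_ite_zero, mul_one]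
  rw [integral_finsetSum]
  · exact Finset.sum_congr rfl fun i _ => integral_ite_one_zero (hp.inter (hq i))
  · intro i _
    rw [ite_one_zero_eq_indicator]
    exact (integrable_const (1 : ℝ)).indicator (hp.inter (hq i))

lemma cexpb_ite_eq_cprb {P : Measure Ω} {F : Set Ω} {p : Ω → Prop} [DecidablePred p]
    (hp : MeasurableSet {ω | p ω}) :
    cexpb P (fun ω => if p ω then (1 : ℝ) else 0) F = cprb P {ω | p ω} F := by
  rw [cexpb_eq_integral_cond, integral_ite_one_zero hp, cprb_eq_measureReal_cond hp]

end Expectation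

section EventHistory

variable {Ω : Type*}

/-- The history `(Y 0, …, Y K)` of an event process as a random vector. The deterministic time `0`
is included so that being at risk at any time `k < K` is an event of the history. -/
def eventHistory (K : ℕ) (Y : ℕ → Ω → Bool) (ω : Ω) (k : Fin (K + 1)) : Bool :=
  Y k ω

lemma eventHistory_preimage_singleton {K : ℕ} {Y : ℕ → Ω → Bool} (hY0 : ∀ ω, Y 0 ω = false)
    {z : Fin (K + 1) → Bool} (hz : z 0 = false) :
    eventHistory K Y ⁻¹' {z} =
      {ω | ∀ k, 1 ≤ k → k ≤ K → Y k ω = z (Fin.ofNat (K + 1) k)} := by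
  ext ω
  refine ⟨fun hω k _ hk => ?_, fun hω => funext fun k => ?_⟩
  · have hval : (Fin.ofNat (K + 1) k : ℕ) = k := Nat.mod_eq_of_lt (by omega)
    rw [← congrFun hω, eventHistory, hval]
  · rcases Fin.eq_zero_or_eq_succ k with rfl | ⟨j, rfl⟩
    · exact (hY0 ω).trans hz.symm
    · have hj : Y j.succ ω = z (Fin.ofNat (K + 1) j.succ) := hω _ j.val.succ_pos j.isLt
      rwa [Fin.ofNat_val_eq_self] at hj

end EventHistory

section Exchangeability

variable {Ω : Type*} [MeasurableSpace Ω] {μ : Measure Ω} {B : Set Ω}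

lemma indepSet_preimage_of_forall_singleton [IsZeroOrProbabilityMeasure μ] {ι : Type*} [Countable ι]
    [MeasurableSpace ι] [MeasurableSingletonClass ι] {Z : Ω → ι} (hZ : Measurable Z)
    (hB : MeasurableSet B) (h : ∀ z, IndepSet (Z ⁻¹' {z}) B μ) (T : Set ι) :
    IndepSet (Z ⁻¹' T) B μ := by
  have hlaw : (μ.restrict B).map Z = μ B • μ.map Z := by
    refine Measure.ext_of_singleton fun z => ?_
    have hz : MeasurableSet (Z ⁻¹' {z}) := hZ (measurableSet_singleton z)
    rw [Measure.smul_apply, Measure.map_apply hZ (measurableSet_singleton z),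
      Measure.map_apply hZ (measurableSet_singleton z), Measure.restrict_apply hz,
      (indepSet_iff_measure_inter_eq_mul hz hB μ).1 (h z), smul_eq_mul, mul_comm]
  have hT : MeasurableSet T := T.to_countable.measurableSet
  rw [indepSet_iff_measure_inter_eq_mul (hZ hT) hB μ, ← Measure.restrict_apply (hZ hT),
    ← Measure.map_apply hZ hT, hlaw, Measure.smul_apply, Measure.map_apply hZ hT, smul_eq_mul,
    mul_comm]

lemma measureReal_inter_preimage_of_indepSet {ι : Type*} {Z Z' : Ω → ι} {T : Set ι}
    (hindep : IndepSet (Z' ⁻¹' T) B μ) (heq : ∀ᵐ ω ∂μ, ω ∈ B → Z ω = Z' ω) :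
    μ.real (B ∩ Z ⁻¹' T) = μ.real B * μ.real (Z' ⁻¹' T) := by
  have hae : (B ∩ Z ⁻¹' T : Set Ω) =ᵐ[μ] (Z' ⁻¹' T ∩ B : Set Ω) := by
    filter_upwards [heq] with ω hω
    refine propext ⟨fun ⟨hB, hT⟩ => ⟨?_, hB⟩, fun ⟨hT, hB⟩ => ⟨hB, ?_⟩⟩
    · rwa [Set.mem_preimage, ← hω hB]
    · rwa [Set.mem_preimage, hω hB]
  rw [measureReal_congr hae, measureReal_def, hindep.measure_inter_eq_mul, ENNReal.toReal_mul,
    mul_comm]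
  rfl

lemma measurable_eventHistory (K : ℕ) {Y : ℕ → Ω → Bool} (hY : ∀ k, Measurable (Y k)) :
    Measurable (eventHistory K Y) :=
  measurable_pi_lambda _ fun k => hY k

lemma indepSet_eventHistory_preimage [IsZeroOrProbabilityMeasure μ] {K : ℕ} {Y : ℕ → Ω → Bool}
    (hY : ∀ k, Measurable (Y k)) (hY0 : ∀ ω, Y 0 ω = false) (hB : MeasurableSet B)
    (h : ∀ y : ℕ → Bool, IndepSet {ω | ∀ k, 1 ≤ k → k ≤ K → Y k ω = y k} B μ)
    (T : Set (Fin (K + 1) → Bool)) :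
    IndepSet (eventHistory K Y ⁻¹' T) B μ := by
  refine indepSet_preimage_of_forall_singleton (measurable_eventHistory K hY) hB (fun z => ?_) T
  cases hz : z 0 with
  | true =>
    have hempty : eventHistory K Y ⁻¹' {z} = ∅ := by
      refine Set.eq_empty_of_forall_notMem fun ω hω => ?_
      have h0 : Y 0 ω = z 0 := congrFun hω 0
      simp [hY0, hz] at h0
    rw [hempty, indepSet_iff_measure_inter_eq_mul .empty hB μ, Set.empty_inter, measure_empty,
      zero_mul]
  | false => exact eventHistory_preimage_singleton hY0 hz ▸ h _

lemma measureReal_inter_incident_eq_mul {K k : ℕ} (hk : k < K) {Y Y' : ℕ → Ω → Bool}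
    (hindep : ∀ T, IndepSet (eventHistory K Y' ⁻¹' T) B μ)
    (hcons : ∀ᵐ ω ∂μ, ω ∈ B → ∀ k ≤ K, Y k ω = Y' k ω) {θ : ℝ}
    (hθ : μ.real ({ω | Y' (k + 1) ω = true} ∩ {ω | Y' k ω = false}) =
      θ * μ.real {ω | Y' k ω = false}) :
    μ.real (B ∩ ({ω | Y (k + 1) ω = true} ∩ {ω | Y k ω = false})) =
      θ * μ.real (B ∩ {ω | Y k ω = false}) := by
  have hhist : ∀ᵐ ω ∂μ, ω ∈ B → eventHistory K Y ω = eventHistory K Y' ω := by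
    filter_upwards [hcons] with ω hω hB
    exact funext fun j => hω hB j (Nat.lt_succ_iff.1 j.isLt)
  let now : Fin (K + 1) := ⟨k, by omega⟩
  let next : Fin (K + 1) := ⟨k + 1, by omega⟩
  have hincident := measureReal_inter_preimage_of_indepSet
    (hindep ({z | z next = true} ∩ {z | z now = false})) hhist
  have hatRisk := measureReal_inter_preimage_of_indepSet (hindep {z | z now = false}) hhist
  calc μ.real (B ∩ ({ω | Y (k + 1) ω = true} ∩ {ω | Y k ω = false}))
      = μ.real B * μ.real ({ω | Y' (k + 1) ω = true} ∩ {ω | Y' k ω = false}) := hincident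
    _ = θ * (μ.real B * μ.real {ω | Y' k ω = false}) := by rw [hθ]; ring
    _ = θ * μ.real (B ∩ {ω | Y k ω = false}) := congrArg (θ * ·) hatRisk.symm

end Exchangeability

section PersonTime

variable {Ω : Type*} [MeasurableSpace Ω] {μ : Measure Ω} {B : Set Ω} {Y : ℕ → Ω → Bool}

/-- The expected person-time at risk accrued in the group `B` before time `n`: the expected number
of times `k < n` at which a member of `B` is still free of the event. -/
noncomputable def personTime (μ : Measure Ω) (B : Set Ω) (Y : ℕ → Ω → Bool) (n : ℕ) : ℝ :=
  ∑ k ∈ Finset.range n, μ.real (B ∩ {ω | Y k ω = false})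

lemma measureReal_inter_event_eq_sum_incident [IsFiniteMeasure μ] {n : ℕ}
    (hY : ∀ k, Measurable (Y k)) (hY0 : ∀ ω, Y 0 ω = false)
    (hYmono : ∀ k < n, ∀ ω, Y k ω = true → Y (k + 1) ω = true) :
    μ.real (B ∩ {ω | Y n ω = true}) =
      ∑ k ∈ Finset.range n, μ.real (B ∩ ({ω | Y (k + 1) ω = true} ∩ {ω | Y k ω = false})) := by
  induction n with
  | zero => simp [hY0]
  | succ n ih =>
    have hprevalent : B ∩ {ω | Y (n + 1) ω = true} ∩ {ω | Y n ω = true} =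
        B ∩ {ω | Y n ω = true} := by
      have hsub : {ω | Y n ω = true} ⊆ {ω | Y (n + 1) ω = true} := hYmono n n.lt_succ_self
      rw [Set.inter_assoc, Set.inter_eq_self_of_subset_right hsub]
    have hincident : (B ∩ {ω | Y (n + 1) ω = true}) \ {ω | Y n ω = true} =
        B ∩ ({ω | Y (n + 1) ω = true} ∩ {ω | Y n ω = false}) := by
      ext ω
      simp [and_assoc]
    rw [Finset.sum_range_succ, ← ih fun k hk => hYmono k (by omega), ← hprevalent, ← hincident]
    exact (measureReal_inter_add_sdiff (hY n (measurableSet_singleton true))).symm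

lemma measureReal_inter_event_eq_mul_personTime [IsFiniteMeasure μ] {n : ℕ}
    (hY : ∀ k, Measurable (Y k)) (hY0 : ∀ ω, Y 0 ω = false)
    (hYmono : ∀ k < n, ∀ ω, Y k ω = true → Y (k + 1) ω = true) {θ : ℝ}
    (hθ : ∀ k < n, μ.real (B ∩ ({ω | Y (k + 1) ω = true} ∩ {ω | Y k ω = false})) =
      θ * μ.real (B ∩ {ω | Y k ω = false})) :
    μ.real (B ∩ {ω | Y n ω = true}) = θ * personTime μ B Y n := by
  rw [measureReal_inter_event_eq_sum_incident hY hY0 hYmono, personTime, Finset.mul_sum]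
  exact Finset.sum_congr rfl fun k hk => hθ k (Finset.mem_range.1 hk)

lemma measureReal_inter_eq_mul_of_sampled_atRisk [IsFiniteMeasure μ] {D : Ω → Bool}
    (hD : Measurable D) {C : Set Ω} {δ : ℝ}
    (hC : ∀ d, μ.real (C ∩ (B ∩ {ω | D ω = d})) =
      δ * (1 - if d = true then 1 else 0) * μ.real (B ∩ {ω | D ω = d})) :
    μ.real (B ∩ C) = δ * μ.real (B ∩ {ω | D ω = false}) := by
  have hdiseased : B ∩ C ∩ {ω | D ω = true} = C ∩ (B ∩ {ω | D ω = true}) := by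
    rw [Set.inter_comm B, Set.inter_assoc]
  have hatRisk : (B ∩ C) \ {ω | D ω = true} = C ∩ (B ∩ {ω | D ω = false}) := by
    ext ω
    simp [and_assoc, and_left_comm]
  have hDm : MeasurableSet {ω | D ω = true} := hD (measurableSet_singleton true)
  rw [← measureReal_inter_add_sdiff hDm, hdiseased, hatRisk, hC, hC]
  simp

lemma integral_sampled_controls_eq_mul_personTime [IsFiniteMeasure μ] {n : ℕ} {p : Ω → Prop}
    [DecidablePred p] (hp : MeasurableSet {ω | p ω}) (hY : ∀ k, Measurable (Y k))
    {S : ℕ → Ω → Bool} (hS : ∀ k, Measurable (S k)) {δ : ℝ}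
    (hδ : ∀ k < n, ∀ y, μ.real ({ω | S k ω = true} ∩ ({ω | p ω} ∩ {ω | Y k ω = y})) =
      δ * (1 - if y = true then 1 else 0) * μ.real ({ω | p ω} ∩ {ω | Y k ω = y})) :
    ∫ ω, (if p ω then (1 : ℝ) else 0) *
        (∑ k ∈ Finset.range n, if S k ω = true then (1 : ℝ) else 0) ∂μ =
      δ * personTime μ {ω | p ω} Y n := by
  have hSm (k : ℕ) : MeasurableSet {ω | S k ω = true} := hS k (measurableSet_singleton true)
  rw [integral_ite_mul_sum_ite _ hp hSm, personTime, Finset.mul_sum]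
  exact Finset.sum_congr rfl fun k hk =>
    measureReal_inter_eq_mul_of_sampled_atRisk (hY k) (hδ k (Finset.mem_range.1 hk))

end PersonTime

section ExposureArm

variable {Ω : Type*} [MeasurableSpace Ω] {P : Measure Ω} [IsFiniteMeasure P] {F : Set Ω}
  {p : Ω → Prop} [DecidablePred p] {K : ℕ} {Y : ℕ → Ω → Bool}

lemma cexpb_ite_cases_eq_mul_personTime_div (hp : MeasurableSet {ω | p ω})
    (hY : ∀ k, Measurable (Y k)) (hY0 : ∀ ω, Y 0 ω = false)
    (hYmono : ∀ k < K, ∀ ω, Y k ω = true → Y (k + 1) ω = true)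
    {Y' : ℕ → Ω → Bool} (hY' : ∀ k, Measurable (Y' k)) (hY'0 : ∀ ω, Y' 0 ω = false)
    (hcons : ∀ᵐ ω ∂P, p ω → ∀ k ≤ K, Y k ω = Y' k ω)
    (hexch : ∀ y : ℕ → Bool,
      cprb P ({ω | ∀ k, 1 ≤ k → k ≤ K → Y' k ω = y k} ∩ {ω | p ω}) F =
        cprb P {ω | ∀ k, 1 ≤ k → k ≤ K → Y' k ω = y k} F * cprb P {ω | p ω} F)
    {θ : ℝ} (hθ : ∀ k < K, 0 < prb P (F ∩ {ω | Y' k ω = false}) →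
      cprb P {ω | Y' (k + 1) ω = true} (F ∩ {ω | Y' k ω = false}) = θ) :
    cexpb P (fun ω => if p ω then (1 : ℝ) else 0) (F ∩ {ω | Y K ω = true}) =
      θ * personTime P[|F] {ω | p ω} Y K / P[|F].real {ω | Y K ω = true} := by
  have hindep : ∀ T, IndepSet (eventHistory K Y' ⁻¹' T) {ω | p ω} P[|F] := by
    refine indepSet_eventHistory_preimage hY' hY'0 hp fun y => ?_
    have hmeas : MeasurableSet {ω | ∀ k, 1 ≤ k → k ≤ K → Y' k ω = y k} := by measurability
    exact (indepSet_cond_iff_cprb_inter_eq_mul hmeas hp).2 (hexch y)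
  have hhazard (k : ℕ) (hk : k < K) :
      P[|F].real ({ω | p ω} ∩ ({ω | Y (k + 1) ω = true} ∩ {ω | Y k ω = false})) =
        θ * P[|F].real ({ω | p ω} ∩ {ω | Y k ω = false}) :=
    measureReal_inter_incident_eq_mul hk hindep (cond_absolutelyContinuous.ae_le hcons)
      (measureReal_cond_inter_of_cprb_eq (hY' (k + 1) (measurableSet_singleton true))
        (hY' k (measurableSet_singleton false)) (hθ k hk))
  have hYK : MeasurableSet {ω | Y K ω = true} := hY K (measurableSet_singleton true)
  rw [cexpb_ite_eq_cprb hp, cprb_inter_eq_cprb_cond hp hYK,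
    ← measureReal_inter_event_eq_mul_personTime hY hY0 hYmono hhazard]
  rfl

lemma cexpb_ite_mul_controls_eq_mul_personTime (hp : MeasurableSet {ω | p ω})
    (hY : ∀ k, Measurable (Y k)) {S : ℕ → Ω → Bool} (hS : ∀ k, Measurable (S k)) {δ : ℝ}
    (hδ : ∀ k < K, ∀ y, 0 < prb P (F ∩ ({ω | p ω} ∩ {ω | Y k ω = y})) →
      cprb P {ω | S k ω = true} (F ∩ ({ω | p ω} ∩ {ω | Y k ω = y})) =
        δ * (1 - if y = true then 1 else 0)) :
    cexpb P (fun ω => (if p ω then (1 : ℝ) else 0) *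
        (∑ k ∈ Finset.range K, if S k ω = true then (1 : ℝ) else 0)) F =
      δ * personTime P[|F] {ω | p ω} Y K := by
  rw [cexpb_eq_integral_cond]
  exact integral_sampled_controls_eq_mul_personTime hp hY hS fun k hk y =>
    measureReal_cond_inter_of_cprb_eq (hS k (measurableSet_singleton true))
      (hp.inter (hY k (measurableSet_singleton y))) (hδ k hk y)

end ExposureArm

theorem riskSet_conditional_ITT_hazardRatio_general
    {Ω : Type*} [MeasurableSpace Ω] (P : Measure Ω) [IsFiniteMeasure P]
    {𝓛 𝓐 : Type*} [DecidableEq 𝓐] [MeasurableSpace 𝓐] [MeasurableSingletonClass 𝓐]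
    (K : ℕ) (L0 : Ω → 𝓛) (A0 : Ω → 𝓐) (Y : ℕ → Ω → Bool)
    (Ycf : 𝓐 → ℕ → Ω → Bool) (S : ℕ → Ω → Bool)
    (hA0 : Measurable A0) (hY : ∀ k, Measurable (Y k))
    (hYcfm : ∀ a k, Measurable (Ycf a k)) (hSm : ∀ k, Measurable (S k))
    (hY0 : ∀ ω, Y 0 ω = false)
    (hYmono : ∀ k, k < K → ∀ ω, Y k ω = true → Y (k + 1) ω = true)
    (hYcf0 : ∀ a, ∀ ω, Ycf a 0 ω = false)
    (l : 𝓛) (δ : ℝ) (hδ : δ ≠ 0)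
    (hS3 : ∀ k, k < K → ∀ (a : 𝓐) (y : Bool),
      0 < prb P {ω | L0 ω = l ∧ A0 ω = a ∧ Y k ω = y} →
      cprb P {ω | S k ω = true} {ω | L0 ω = l ∧ A0 ω = a ∧ Y k ω = y} =
        δ * (1 - (if y = true then (1 : ℝ) else 0)))
    (hcons : ∀ a : 𝓐, ∀ᵐ ω ∂P, A0 ω = a → ∀ k ≤ K, Y k ω = Ycf a k ω)
    (hBCE : ∀ (a : 𝓐) (y : ℕ → Bool),
      cprb P {ω | (∀ k, 1 ≤ k → k ≤ K → Ycf a k ω = y k) ∧ A0 ω = a} {ω | L0 ω = l} =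
        cprb P {ω | ∀ k, 1 ≤ k → k ≤ K → Ycf a k ω = y k} {ω | L0 ω = l} *
          cprb P {ω | A0 ω = a} {ω | L0 ω = l})
    (θ : 𝓐 → ℝ)
    (hH3 : ∀ (a : 𝓐) (k : ℕ), k < K →
      0 < prb P {ω | L0 ω = l ∧ Ycf a k ω = false} →
      cprb P {ω | Ycf a (k + 1) ω = true} {ω | L0 ω = l ∧ Ycf a k ω = false} = θ a)
    (a₁ a₀ : 𝓐)
    (hcases : cexpb P (fun ω => if A0 ω = a₀ then (1 : ℝ) else 0)
        ({ω | L0 ω = l} ∩ {ω | Y K ω = true}) ≠ 0)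
    (hcontrols₁ : cexpb P (fun ω => (if A0 ω = a₁ then (1 : ℝ) else 0) *
        (∑ k ∈ Finset.range K, if S k ω = true then (1 : ℝ) else 0)) {ω | L0 ω = l} ≠ 0)
    (hcontrols₀ : cexpb P (fun ω => (if A0 ω = a₀ then (1 : ℝ) else 0) *
        (∑ k ∈ Finset.range K, if S k ω = true then (1 : ℝ) else 0)) {ω | L0 ω = l} ≠ 0) :
    (cexpb P (fun ω => if A0 ω = a₁ then (1 : ℝ) else 0)
        ({ω | L0 ω = l} ∩ {ω | Y K ω = true}) /
      cexpb P (fun ω => if A0 ω = a₀ then (1 : ℝ) else 0)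
        ({ω | L0 ω = l} ∩ {ω | Y K ω = true})) /
    (cexpb P (fun ω => (if A0 ω = a₁ then (1 : ℝ) else 0) *
        (∑ k ∈ Finset.range K, if S k ω = true then (1 : ℝ) else 0)) {ω | L0 ω = l} /
      cexpb P (fun ω => (if A0 ω = a₀ then (1 : ℝ) else 0) *
        (∑ k ∈ Finset.range K, if S k ω = true then (1 : ℝ) else 0)) {ω | L0 ω = l}) =
    θ a₁ / θ a₀
    ∧
    ∀ k, k < K →
      0 < prb P {ω | L0 ω = l ∧ Ycf a₁ k ω = false} →
      0 < prb P {ω | L0 ω = l ∧ Ycf a₀ k ω = false} →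
      θ a₁ / θ a₀ =
        cprb P {ω | Ycf a₁ (k + 1) ω = true} {ω | L0 ω = l ∧ Ycf a₁ k ω = false} /
          cprb P {ω | Ycf a₀ (k + 1) ω = true} {ω | L0 ω = l ∧ Ycf a₀ k ω = false} := by
  refine ⟨?_, fun k hk h₁ h₀ => by rw [hH3 a₁ k hk h₁, hH3 a₀ k hk h₀]⟩
  have hA (a : 𝓐) : MeasurableSet {ω | A0 ω = a} := hA0 (measurableSet_singleton a)
  have cases_eq (a : 𝓐) := cexpb_ite_cases_eq_mul_personTime_div (hA a) hY hY0 hYmono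
    (hYcfm a) (hYcf0 a) (hcons a) (hBCE a) (hH3 a)
  have controls_eq (a : 𝓐) := cexpb_ite_mul_controls_eq_mul_personTime (F := {ω | L0 ω = l})
    (hA a) hY hSm fun k hk => hS3 k hk a
  rw [cases_eq, div_ne_zero_iff] at hcases
  rw [controls_eq, mul_ne_zero_iff] at hcontrols₁ hcontrols₀
  rw [cases_eq, cases_eq, controls_eq, controls_eq, div_div_div_cancel_right₀ hcases.2,
    mul_div_mul_left _ _ hδ, mul_div_mul_comm,
    mul_div_cancel_right₀ _ (div_ne_zero hcontrols₁.2 hcontrols₀.2)]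

/-- Theorem B5: risk-set sampling identifies the conditional intention-to-treat
(discrete-time) hazard ratio. -/
theorem riskSet_conditional_ITT_hazardRatio
    {Ω : Type*} [MeasurableSpace Ω] (P : Measure Ω) [IsProbabilityMeasure P]
    {𝓛 : Type*} [Fintype 𝓛] [MeasurableSpace 𝓛]
    (K : ℕ) (hK : 0 < K)
    (L0 : Ω → 𝓛) (A0 : Ω → Bool) (Y : ℕ → Ω → Bool)
    (Ycf : Bool → ℕ → Ω → Bool) (S : ℕ → Ω → Bool)
    (hL0 : Measurable L0) (hA0 : Measurable A0) (hY : ∀ k, Measurable (Y k))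
    (hYcfm : ∀ a k, Measurable (Ycf a k)) (hSm : ∀ k, Measurable (S k))
    (hY0 : ∀ ω, Y 0 ω = false)
    (hYmono : ∀ k, k < K → ∀ ω, Y k ω = true → Y (k+1) ω = true)
    (hYcf0 : ∀ a, ∀ ω, Ycf a 0 ω = false)
    (hYcfmono : ∀ a, ∀ k, k < K → ∀ ω, Ycf a k ω = true → Ycf a (k+1) ω = true)
    -- covariate-dependent sampling fractions (weak version of S3)
    (δ : 𝓛 → ℝ) (hδpos : ∀ l, 0 < δ l) (hδle : ∀ l, δ l ≤ 1)
    (hS3 : ∀ k, k < K → ∀ (l : 𝓛) (a y : Bool),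
      0 < prb P {ω | L0 ω = l ∧ A0 ω = a ∧ Y k ω = y} →
      cprb P {ω | S k ω = true} {ω | L0 ω = l ∧ A0 ω = a ∧ Y k ω = y} =
        δ l * (1 - (if y = true then (1:ℝ) else 0)))
    -- consistency
    (hcons : ∀ a : Bool, ∀ᵐ ω ∂P, A0 ω = a → ∀ k ≤ K, Y k ω = Ycf a k ω)
    -- baseline conditional exchangeability: (Y_1(a),…,Y_K(a)) ⫫ A0 | L0
    (hBCE : ∀ (a : Bool) (l : 𝓛) (y : ℕ → Bool) (a' : Bool),
      cprb P {ω | (∀ k, 1 ≤ k → k ≤ K → Ycf a k ω = y k) ∧ A0 ω = a'}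
          {ω | L0 ω = l} =
        cprb P {ω | ∀ k, 1 ≤ k → k ≤ K → Ycf a k ω = y k} {ω | L0 ω = l} *
          cprb P {ω | A0 ω = a'} {ω | L0 ω = l})
    -- positivity
    (hpos : ∀ l : 𝓛, 0 < prb P {ω | L0 ω = l} →
      0 < cprb P {ω | A0 ω = true} {ω | L0 ω = l} ∧
        cprb P {ω | A0 ω = true} {ω | L0 ω = l} < 1)
    -- homogeneity condition H3: constant conditional counterfactual hazards
    (θ : Bool → ℝ) (hθ0 : θ false ≠ 0)
    (hH3 : ∀ (a : Bool) (k : ℕ), k < K → ∀ l : 𝓛,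
      0 < prb P {ω | L0 ω = l ∧ Ycf a k ω = false} →
      cprb P {ω | Ycf a (k+1) ω = true} {ω | L0 ω = l ∧ Ycf a k ω = false} = θ a)
    -- the fixed covariate level l
    (l : 𝓛)
    (hlY : 0 < prb P {ω | L0 ω = l ∧ Y K ω = true})
    -- well-definedness and nonzero denominators
    (hint : ∀ a : Bool,
      Integrable (fun ω => (if A0 ω = a then (1:ℝ) else 0) *
        (∑ k ∈ Finset.range K, if S k ω = true then (1:ℝ) else 0))
        (P.restrict {ω | L0 ω = l}))
    (hd1 : cexpb P (fun ω => if A0 ω = false then (1:ℝ) else 0)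
        ({ω | L0 ω = l} ∩ {ω | Y K ω = true}) ≠ 0)
    (hd2 : cexpb P (fun ω => (if A0 ω = false then (1:ℝ) else 0) *
        (∑ k ∈ Finset.range K, if S k ω = true then (1:ℝ) else 0)) {ω | L0 ω = l} ≠ 0)
    (hd3 : cexpb P (fun ω => (if A0 ω = true then (1:ℝ) else 0) *
          (∑ k ∈ Finset.range K, if S k ω = true then (1:ℝ) else 0)) {ω | L0 ω = l} /
        cexpb P (fun ω => (if A0 ω = false then (1:ℝ) else 0) *
          (∑ k ∈ Finset.range K, if S k ω = true then (1:ℝ) else 0)) {ω | L0 ω = l} ≠ 0) :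
    (cexpb P (fun ω => if A0 ω = true then (1:ℝ) else 0)
        ({ω | L0 ω = l} ∩ {ω | Y K ω = true}) /
      cexpb P (fun ω => if A0 ω = false then (1:ℝ) else 0)
        ({ω | L0 ω = l} ∩ {ω | Y K ω = true})) /
    (cexpb P (fun ω => (if A0 ω = true then (1:ℝ) else 0) *
        (∑ k ∈ Finset.range K, if S k ω = true then (1:ℝ) else 0)) {ω | L0 ω = l} /
      cexpb P (fun ω => (if A0 ω = false then (1:ℝ) else 0) *
        (∑ k ∈ Finset.range K, if S k ω = true then (1:ℝ) else 0)) {ω | L0 ω = l}) =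
    θ true / θ false
    ∧
    ∀ k, k < K →
      0 < prb P {ω | L0 ω = l ∧ Ycf true k ω = false} →
      0 < prb P {ω | L0 ω = l ∧ Ycf false k ω = false} →
      θ true / θ false =
        cprb P {ω | Ycf true (k+1) ω = true} {ω | L0 ω = l ∧ Ycf true k ω = false} /
          cprb P {ω | Ycf false (k+1) ω = true}
            {ω | L0 ω = l ∧ Ycf false k ω = false} :=
  riskSet_conditional_ITT_hazardRatio_general P K L0 A0 Y Ycf S hA0 hY hYcfm hSm hY0 hYmono hYcf0
    l (δ l) (hδpos l).ne' (fun k hk => hS3 k hk l) hcons (fun a y => hBCE a l y a) θ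
    (fun a k hk => hH3 a k hk l) true false hd1 (div_ne_zero_iff.1 hd3).1 hd2
end
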